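/- For all integers L ≥ 2 and all integers i, j, the q-multinomial coefficients of order 3 satisfy the symmetric second-order recurrence \binom{L}{i, j, L-i-j}_q = \binom{L-1}{i, j, L-1-i-j}_q + q^{L-i} \binom{L-1}{i-1, j, L-i-j}_q + q^{L-j} \binom{L-1}{i, j-1, L-i-j}_q + q^{L-i-j} (1 - q^{L-1}) \binom{L-2}{i-1, j-1, L-i-j}_q, where a q-multinomial coefficient is interpreted as 0 whenever any of its three lower arguments is negative. -/

import Mathlib

open Finset

/-- `(q)_n = (q;q)_n = ∏_{t=0}^{n-1} (1 - q^{t+1})` in `ℚ(q)`. -/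
noncomputable def qPoch (n : ℕ) : RatFunc ℚ :=
  ∏ t ∈ Finset.range n, (1 - (RatFunc.X : RatFunc ℚ) ^ (t + 1))

/-- The q-multinomial coefficient of order 3,
`[u+v+w; u, v, w] = (q)_{u+v+w} / ((q)_u (q)_v (q)_w)`, set to `0` if any of
`u, v, w` is negative. -/
noncomputable def qtrinom (u v w : ℤ) : RatFunc ℚ :=
  if 0 ≤ u ∧ 0 ≤ v ∧ 0 ≤ w then
    qPoch (u + v + w).toNat / (qPoch u.toNat * qPoch v.toNat * qPoch w.toNat) else 0

lemma one_sub_X_pow_ne (n : ℕ) : (1 - (RatFunc.X : RatFunc ℚ) ^ (n + 1)) ≠ 0 := by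
  intro h
  have h1 : algebraMap (Polynomial ℚ) (RatFunc ℚ) (1 - Polynomial.X ^ (n + 1)) =
      algebraMap (Polynomial ℚ) (RatFunc ℚ) 0 := by
    simpa [RatFunc.algebraMap_X] using h
  have h2 := RatFunc.algebraMap_injective ℚ h1
  have h3 := congrArg (Polynomial.eval 0) h2
  simp at h3

lemma qPoch_ne (n : ℕ) : qPoch n ≠ 0 :=
  Finset.prod_ne_zero_iff.mpr fun t _ => one_sub_X_pow_ne t

lemma qPoch_succ (n : ℕ) :
    qPoch (n + 1) = qPoch n * (1 - (RatFunc.X : RatFunc ℚ) ^ (n + 1)) :=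
  Finset.prod_range_succ _ _

lemma qtrinom_swap12 (u v w : ℤ) : qtrinom u v w = qtrinom v u w := by
  unfold qtrinom
  rw [show u + v + w = v + u + w by ring, mul_comm (qPoch u.toNat)]
  exact if_congr (by tauto) rfl rfl

lemma qtrinom_swap13 (u v w : ℤ) : qtrinom u v w = qtrinom w v u := by
  unfold qtrinom
  rw [show u + v + w = w + v + u by ring,
    show qPoch u.toNat * qPoch v.toNat * qPoch w.toNat =
      qPoch w.toNat * qPoch v.toNat * qPoch u.toNat by ring]
  exact if_congr (by tauto) rfl rfl

lemma qtrinom_step (u v w : ℤ) :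
    (1 - (RatFunc.X : RatFunc ℚ) ^ (u + v + w)) * qtrinom (u - 1) v w =
      (1 - (RatFunc.X : RatFunc ℚ) ^ u) * qtrinom u v w := by
  by_cases hv : 0 ≤ v
  swap
  · simp [qtrinom, hv]
  by_cases hw : 0 ≤ w
  swap
  · simp [qtrinom, hw]
  rcases lt_trichotomy u 0 with hu | hu | hu
  · have h1 : ¬ (0 ≤ u) := by omega
    have h2 : ¬ (1 ≤ u) := by omega
    simp [qtrinom, h1, h2]
  · subst hu
    simp [qtrinom]
  · obtain ⟨a, rfl⟩ : ∃ a : ℕ, u = ((a + 1 : ℕ) : ℤ) := ⟨(u - 1).toNat, by omega⟩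
    obtain ⟨b, rfl⟩ := Int.eq_ofNat_of_zero_le hv
    obtain ⟨c, rfl⟩ := Int.eq_ofNat_of_zero_le hw
    unfold qtrinom
    rw [if_pos (by omega), if_pos (by omega),
      show (((a + 1 : ℕ) : ℤ) - 1 + b + c).toNat = a + b + c by omega,
      show (((a + 1 : ℕ) : ℤ) + b + c).toNat = a + b + c + 1 by omega,
      show (((a + 1 : ℕ) : ℤ) - 1).toNat = a by omega,
      show ((a + 1 : ℕ) : ℤ) + b + c = ((a + b + c + 1 : ℕ) : ℤ) by push_cast; ring,
      Int.toNat_natCast, Int.toNat_natCast, Int.toNat_natCast, zpow_natCast, zpow_natCast,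
      qPoch_succ, qPoch_succ]
    have h1 := qPoch_ne a
    have h2 := qPoch_ne b
    have h3 := qPoch_ne c
    have h4 := one_sub_X_pow_ne a
    rw [mul_div_assoc', mul_div_assoc', div_eq_div_iff (by simp_all) (by simp_all)]
    ring

/-- The symmetric second order recurrence (5.8) for the q-multinomial coefficients:
for all integers `L ≥ 2` and all integers `i, j`,
`[L; i,j,L-i-j] = [L-1; i,j,L-1-i-j] + q^{L-i} [L-1; i-1,j,L-i-j]
  + q^{L-j} [L-1; i,j-1,L-i-j] + q^{L-i-j}(1-q^{L-1}) [L-2; i-1,j-1,L-i-j]`. -/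
theorem qtrinomial_symmetric_recurrence (L i j : ℤ) (hL : 2 ≤ L) :
    qtrinom i j (L - i - j) =
      qtrinom i j (L - 1 - i - j) +
      (RatFunc.X : RatFunc ℚ) ^ (L - i) * qtrinom (i - 1) j (L - i - j) +
      (RatFunc.X : RatFunc ℚ) ^ (L - j) * qtrinom i (j - 1) (L - i - j) +
      (RatFunc.X : RatFunc ℚ) ^ (L - i - j) * (1 - (RatFunc.X : RatFunc ℚ) ^ (L - 1)) *
        qtrinom (i - 1) (j - 1) (L - i - j) := by
  have hX : (RatFunc.X : RatFunc ℚ) ≠ 0 := RatFunc.X_ne_zero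
  obtain ⟨k, rfl⟩ : ∃ k, L = i + j + k := ⟨L - i - j, by ring⟩
  have hne : (1 - (RatFunc.X : RatFunc ℚ) ^ (i + j + k)) ≠ 0 := by
    obtain ⟨n, hn⟩ : ∃ n : ℕ, i + j + k = ((n + 1 : ℕ) : ℤ) :=
      ⟨(i + j + k - 1).toNat, by omega⟩
    rw [hn, zpow_natCast]
    exact one_sub_X_pow_ne n
  rw [show i + j + k - i - j = k by ring, show i + j + k - 1 - i - j = k - 1 by ring,
    show i + j + k - i = j + k by ring, show i + j + k - j = i + k by ring]
  have e1 := qtrinom_step i j k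
  have e2 := qtrinom_step j i k
  rw [qtrinom_swap12 (j - 1), qtrinom_swap12 j, show j + i + k = i + j + k by ring] at e2
  have e3 := qtrinom_step k j i
  rw [qtrinom_swap13 (k - 1), qtrinom_swap13 k, show k + j + i = i + j + k by ring] at e3
  have e4 := qtrinom_step j (i - 1) k
  rw [qtrinom_swap12 (j - 1), qtrinom_swap12 j,
    show j + (i - 1) + k = i + j + k - 1 by ring] at e4
  rw [mul_assoc _ (1 - (RatFunc.X : RatFunc ℚ) ^ (i + j + k - 1)), e4]
  apply mul_left_cancel₀ hne
  simp only [zpow_add₀ hX] at *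
  generalize (RatFunc.X : RatFunc ℚ) ^ i = x at *
  generalize (RatFunc.X : RatFunc ℚ) ^ j = y at *
  generalize (RatFunc.X : RatFunc ℚ) ^ k = z at *
  linear_combination -e3 - (y * z + z * (1 - y)) * e1 - x * z * e2
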